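/- For every integer c ≥ 0 and every (r,s,t,u) ∈ S_{0,c} (i.e., r,s,t,u ∈ ℤ_{≥0} with u ≥ t, 2r ≥ s, 2t − s − u ≥ 0 and c − r + s − t ≥ 0), the coefficient C^{0,c}_{r,s,t,u} admits the closed product form C^{0,c}_{r,s,t,u} = [(q²)_{2r} / ((q²)_s·(q²)_{2t−s−u}·(q²)_{2r−s})] · [(q⁴)_c / ((q⁴)_r·(q⁴)_{u−t}·(q⁴)_{c−r+s−t})]. -/

import Mathlib

noncomputable section

/-- The field `K = ℚ(q)` of rational functions in `q` over `ℚ`. -/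
abbrev K : Type := RatFunc ℚ

/-- The variable `q ∈ K = ℚ(q)`. -/
def q : K := RatFunc.X

open Finset in
/-- The q-Pochhammer symbol `(a;p)_n = ∏_{j<n} (1 − a·p^j)`. -/
def poch (a p : K) (n : ℕ) : K := ∏ j ∈ range n, (1 - a * p ^ j)

/-- `(q²)_n = (q²;q²)_n`. -/
def q2p (n : ℕ) : K := poch (q ^ 2) (q ^ 2) n

/-- `(q⁴)_n = (q⁴;q⁴)_n`. -/
def q4p (n : ℕ) : K := poch (q ^ 4) (q ^ 4) n

/-- `Ξ_{α,β,γ}` (depending also on `b,c,r,s,t,u`). -/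
def Xi (b c r s t u a β γ : ℕ) : K :=
  q2p (b + t - (s + a)) * q2p (2 * r + β - s) * q4p (c + s - (r + β)) * q4p (c + γ)
  / (q2p a * q2p β * q2p γ * q2p (u - (t + a)) * q2p (t - β)
     * q2p (b + β - (s + a)) * q2p (s - (β + γ)) * q4p (c + γ - r))

/-- `φ_C(α,β,γ) = α(α+1+2t) + β(β−1−2α+2b−4r) + γ(γ−1−4r)`. -/
def phiC (b r t a β γ : ℕ) : ℤ :=
  (a : ℤ) * ((a : ℤ) + 1 + 2 * t) + (β : ℤ) * ((β : ℤ) - 1 - 2 * a + 2 * b - 4 * r)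
    + (γ : ℤ) * ((γ : ℤ) - 1 - 4 * r)

open Finset in
/-- The inner sum in `C^{b,c}_{r,s,t,u}`, over `(α,β,γ) ∈ ℤ_{≥0}³` with
`α ≤ u−t`, `β ≤ t`, `α−β ≤ b−s`, `β+γ ≤ s`, `γ ≥ r−c`. -/
def Csum (b c r s t u : ℕ) : K :=
  ∑ p ∈ ((range (u - t + 1)) ×ˢ (range (t + 1)) ×ˢ (range (s + 1))).filter
      (fun p => p.1 + t ≤ u ∧ p.2.1 ≤ t ∧ p.1 + s ≤ p.2.1 + b ∧
        p.2.1 + p.2.2 ≤ s ∧ r ≤ p.2.2 + c),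
    (-1 : K) ^ (p.2.1 + p.2.2) * q ^ phiC b r t p.1 p.2.1 p.2.2
      * Xi b c r s t u p.1 p.2.1 p.2.2

/-- The coefficient `C^{b,c}_{r,s,t,u}`. -/
def Cbc (b c r s t u : ℕ) : K :=
  (q2p b * q2p (u - t)
      / (q2p (b + 2 * t - (s + u)) * q2p (2 * r - s) * q4p r * q4p (u - t)
         * q4p (c + s - (r + t))))
    * ((-1 : K) ^ s * q ^ ((s : ℤ) * (4 * (r : ℤ) - (s : ℤ) + 1)) * Csum b c r s t u)

theorem q_ne_zero : q ≠ 0 := RatFunc.X_ne_zero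

theorem q_pow_ne_one (n : ℕ) (hn : 0 < n) : (1 : K) - q ^ n ≠ 0 := by
  intro h
  have h1 : q ^ n = 1 := (sub_eq_zero.mp h).symm
  have h2 : algebraMap (Polynomial ℚ) (RatFunc ℚ) (Polynomial.X ^ n)
      = algebraMap (Polynomial ℚ) (RatFunc ℚ) 1 := by
    rw [map_pow, RatFunc.algebraMap_X, map_one]
    exact h1
  have h3 := RatFunc.algebraMap_injective ℚ h2
  have h4 := congrArg Polynomial.natDegree h3
  rw [Polynomial.natDegree_X_pow, Polynomial.natDegree_one] at h4
  omega

theorem q2p_ne_zero (n : ℕ) : q2p n ≠ 0 := by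
  unfold q2p poch
  refine Finset.prod_ne_zero_iff.mpr fun j _ => ?_
  rw [← pow_mul, ← pow_add]
  exact q_pow_ne_one _ (by omega)

theorem q4p_ne_zero (n : ℕ) : q4p n ≠ 0 := by
  unfold q4p poch
  refine Finset.prod_ne_zero_iff.mpr fun j _ => ?_
  rw [← pow_mul, ← pow_add]
  exact q_pow_ne_one _ (by omega)

theorem q2p_zero : q2p 0 = 1 := by simp [q2p, poch]

theorem Csum_zero (c r s t u : ℕ) (h1 : t ≤ u) (hst : s ≤ t) (hrc : r ≤ c) :
    Csum 0 c r s t u = (-1 : K) ^ s * q ^ phiC 0 r t 0 s 0 * Xi 0 c r s t u 0 s 0 := by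
  unfold Csum
  rw [Finset.sum_eq_single (0, s, 0)]
  · rfl
  · rintro ⟨a, β, γ⟩ hp hne
    exfalso
    simp only [Finset.mem_filter, Finset.mem_product, Finset.mem_range] at hp
    apply hne
    obtain ⟨_, h⟩ := hp
    simp only [Prod.mk.injEq]
    omega
  · intro hp
    exfalso
    apply hp
    simp only [Finset.mem_filter, Finset.mem_product, Finset.mem_range]
    omega

/-- closed product form of `C^{0,c}_{r,s,t,u}` for `(r,s,t,u) ∈ S_{0,c}`. -/
theorem C0c_closed (c r s t u : ℕ) (h1 : t ≤ u) (h2 : s ≤ 2 * r)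
    (h3 : s + u ≤ 2 * t) (h4 : r + t ≤ c + s) :
    Cbc 0 c r s t u =
      (q2p (2 * r) / (q2p s * q2p (2 * t - (s + u)) * q2p (2 * r - s)))
        * (q4p c / (q4p r * q4p (u - t) * q4p (c + s - (r + t)))) := by
  have hst : s ≤ t := by omega
  have hrc : r ≤ c := by omega
  unfold Cbc
  rw [Csum_zero c r s t u h1 hst hrc]
  have hq : q ^ ((s : ℤ) * (4 * (r : ℤ) - (s : ℤ) + 1)) * q ^ phiC 0 r t 0 s 0 = 1 := by
    rw [← zpow_add₀ q_ne_zero, ← zpow_zero q]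
    congr 1
    unfold phiC
    push_cast
    ring
  have hs : (-1 : K) ^ s * (-1) ^ s = 1 := by
    rw [← mul_pow]; simp
  have hX : Xi 0 c r s t u 0 s 0 = q2p (2 * r) * q4p c / (q2p s * q2p (u - t)) := by
    unfold Xi
    have e1 : 2 * r + s - s = 2 * r := by omega
    have e2 : c + s - (r + s) = c - r := by omega
    have n1 := q2p_ne_zero (t - s)
    have n2 := q2p_ne_zero s
    have n3 := q2p_ne_zero (u - t)
    have n4 := q4p_ne_zero (c - r)
    simp only [zero_add, add_zero, e1, e2, Nat.sub_self, q2p_zero]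
    field_simp
  have key : (-1 : K) ^ s * q ^ ((s : ℤ) * (4 * (r : ℤ) - (s : ℤ) + 1))
      * ((-1 : K) ^ s * q ^ phiC 0 r t 0 s 0 * Xi 0 c r s t u 0 s 0)
      = Xi 0 c r s t u 0 s 0 := by
    linear_combination (Xi 0 c r s t u 0 s 0) * hq
      + (q ^ ((s : ℤ) * (4 * (r : ℤ) - (s : ℤ) + 1)) * q ^ phiC 0 r t 0 s 0
        * Xi 0 c r s t u 0 s 0) * hs
  rw [key, hX, q2p_zero, zero_add]
  have n2 := q2p_ne_zero s
  have n3 := q2p_ne_zero (u - t)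
  have n4 := q2p_ne_zero (2 * t - (s + u))
  have n5 := q2p_ne_zero (2 * r - s)
  have n6 := q4p_ne_zero r
  have n7 := q4p_ne_zero (u - t)
  have n8 := q4p_ne_zero (c + s - (r + t))
  field_simp
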